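/- For every δ > 0 and Λ > 0 there exist ε > 0 and κ₀ > 0 such that the following holds: if κ ≥ κ₀, u and v are smooth functions on B₂ ⊂ ℝⁿ with 0 < u ≤ Λ and 0 < v ≤ Λ, satisfying Δu = κ u v² and Δv = κ v u² on B₂, and there is a vector e ∈ ℝⁿ with |e| ≤ Λ and sup_{x ∈ B₂} |u(x) − v(x) − e·x| ≤ ε, then ∫_{B₁} |∇u − ∇v − e|² dx ≤ δ². -/

import Mathlib

/-!
Put `w = u - v - e·x`, so `|w| ≤ ε` on `B₂`. Since `Δw = κuv(v - u)`, one has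
`|Δw| ≤ κuv(u + v) = Δ(u + v)`, and therefore the function `F = w² + 2ε(u + v)` satisfies
`ΔF = 2|∇w|² + 2wΔw + 2εΔ(u + v) ≥ 2|∇w|²`, while `0 ≤ F ≤ ε² + 4εΛ` on `B₂`.
Testing with a cutoff `η` that is `1` on `B₁` and supported in `B_{3/2}`, Green's identity gives
`2 ∫_{B₁} |∇w|² ≤ ∫ η ΔF = ∫ F Δη ≤ (ε² + 4εΛ) ∫ |Δη|`,
which is small with `ε`, uniformly in `κ ≥ 0`; in particular `κ₀ = 1` works.

The pointwise inequality is `two_mul_norm_gradient_sq_le_lap`, Green's identity is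
`integral_mul_lap_eq`.
-/

open MeasureTheory Metric Set
open scoped RealInnerProductSpace ENNReal

/-- Euclidean space `ℝⁿ`. -/
abbrev Euc (n : ℕ) := EuclideanSpace ℝ (Fin n)

/-- The Laplacian `Δu` of a function `u : ℝⁿ → ℝ`. -/
noncomputable def lap {n : ℕ} (u : Euc n → ℝ) (x : Euc n) : ℝ :=
  ∑ i : Fin n,
    fderiv ℝ (fun y => fderiv ℝ u y (EuclideanSpace.single i 1)) x (EuclideanSpace.single i 1)

/-- The divergence `div Y = Σ_α ∂Y^α/∂x_α` of a vector field `Y`. -/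
noncomputable def vdiv {n : ℕ} (Y : Euc n → Euc n) (x : Euc n) : ℝ :=
  ∑ i : Fin n, fderiv ℝ Y x (EuclideanSpace.single i 1) i

/-- `DY(p,q)(x) = Σ_{α,β} (∂Y^α/∂x_β)(x) p_α q_β`. -/
noncomputable def DYbil {n : ℕ} (Y : Euc n → Euc n) (p q x : Euc n) : ℝ :=
  ∑ α : Fin n, ∑ β : Fin n,
    fderiv ℝ Y x (EuclideanSpace.single β 1) α * p α * q β

/-- The rescaled function `u_κ(x) = R⁻¹ u(x₀ + R x)` (with `κ = R⁴`). -/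
noncomputable def resc {n : ℕ} (u : Euc n → ℝ) (x₀ : Euc n) (R : ℝ) (x : Euc n) : ℝ :=
  R⁻¹ * u (x₀ + R • x)

section Laplacian

variable {n : ℕ} {f g : Euc n → ℝ} {x : Euc n}

lemma eventually_differentiableAt_of_contDiffAt (hf : ContDiffAt ℝ 2 f x) :
    ∀ᶠ y in nhds x, DifferentiableAt ℝ f y := by
  filter_upwards [hf.eventually (by simp)] with y hy
  exact hy.differentiableAt (by simp)

lemma differentiableAt_fderiv_apply (hf : ContDiffAt ℝ 2 f x) (a : Euc n) :
    DifferentiableAt ℝ (fun y => fderiv ℝ f y a) x := by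
  have h : ContDiffAt ℝ 1 (fderiv ℝ f) x := hf.fderiv_right (by norm_num)
  exact (h.differentiableAt (by simp)).clm_apply (differentiableAt_const a)

lemma lap_congr (h : f =ᶠ[nhds x] g) : lap f x = lap g x := by
  unfold lap
  refine Finset.sum_congr rfl fun i _ => ?_
  have h2 : (fun y => fderiv ℝ f y (EuclideanSpace.single i 1)) =ᶠ[nhds x]
      fun y => fderiv ℝ g y (EuclideanSpace.single i 1) := by
    filter_upwards [h.fderiv (𝕜 := ℝ)] with y hy
    rw [hy]
  exact congrArg (fun L => L (EuclideanSpace.single i 1)) (h2.fderiv_eq (𝕜 := ℝ))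

lemma lap_add (hf : ContDiffAt ℝ 2 f x) (hg : ContDiffAt ℝ 2 g x) :
    lap (fun y => f y + g y) x = lap f x + lap g x := by
  unfold lap
  rw [← Finset.sum_add_distrib]
  refine Finset.sum_congr rfl fun i _ => ?_
  set a : Euc n := EuclideanSpace.single i 1
  have h2 : (fun y => fderiv ℝ (fun y => f y + g y) y a) =ᶠ[nhds x]
      fun y => fderiv ℝ f y a + fderiv ℝ g y a := by
    filter_upwards [eventually_differentiableAt_of_contDiffAt hf,
      eventually_differentiableAt_of_contDiffAt hg] with y hy hy'
    rw [fderiv_fun_add hy hy', add_apply]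
  rw [h2.fderiv_eq, fderiv_fun_add (differentiableAt_fderiv_apply hf a)
    (differentiableAt_fderiv_apply hg a), add_apply]

lemma lap_const_mul (hf : ContDiffAt ℝ 2 f x) (c : ℝ) :
    lap (fun y => c * f y) x = c * lap f x := by
  unfold lap
  rw [Finset.mul_sum]
  refine Finset.sum_congr rfl fun i _ => ?_
  set a : Euc n := EuclideanSpace.single i 1
  have h2 : (fun y => fderiv ℝ (fun y => c * f y) y a) =ᶠ[nhds x]
      fun y => c * fderiv ℝ f y a := by
    filter_upwards [eventually_differentiableAt_of_contDiffAt hf] with y hy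
    rw [fderiv_const_mul hy]
    simp
  rw [h2.fderiv_eq, fderiv_const_mul (differentiableAt_fderiv_apply hf a)]
  simp

lemma lap_inner (e : Euc n) : lap (fun y => ⟪e, y⟫) x = 0 := by
  unfold lap
  refine Finset.sum_eq_zero fun i _ => ?_
  have h2 : (fun y : Euc n => fderiv ℝ (fun y => ⟪e, y⟫) y (EuclideanSpace.single i 1)) =
      fun _ => ⟪e, EuclideanSpace.single i 1⟫ := by
    funext y
    rw [((innerSL ℝ e).hasFDerivAt (x := y)).fderiv (f := fun y => ⟪e, y⟫)]
    simp
  rw [h2]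
  simp

lemma norm_gradient_sq : ‖gradient f x‖ ^ 2 =
    ∑ i : Fin n, fderiv ℝ f x (EuclideanSpace.single i 1) ^ 2 := by
  rw [EuclideanSpace.real_norm_sq_eq]
  refine Finset.sum_congr rfl fun i _ => ?_
  rw [← inner_gradient_left, EuclideanSpace.inner_single_right]
  simp

lemma lap_sq (hf : ContDiffAt ℝ 2 f x) :
    lap (fun y => f y ^ 2) x = 2 * ‖gradient f x‖ ^ 2 + 2 * (f x * lap f x) := by
  rw [norm_gradient_sq]
  unfold lap
  simp only [Finset.mul_sum]
  rw [← Finset.sum_add_distrib]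
  refine Finset.sum_congr rfl fun i _ => ?_
  set a : Euc n := EuclideanSpace.single i 1
  have h2 : (fun y => fderiv ℝ (fun y => f y ^ 2) y a) =ᶠ[nhds x]
      fun y => 2 * (f y * fderiv ℝ f y a) := by
    filter_upwards [eventually_differentiableAt_of_contDiffAt hf] with y hy
    rw [(hy.hasFDerivAt.pow 2).fderiv]
    simp
    ring
  have hd := hf.differentiableAt (by simp)
  have hd2 := differentiableAt_fderiv_apply hf a
  rw [h2.fderiv_eq, fderiv_const_mul (hd.fun_mul hd2), fderiv_fun_mul hd hd2]
  simp
  ring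

/-- Green's identity for compactly supported functions. -/
lemma integral_mul_lap_eq (hf : ContDiff ℝ 2 f) (hg : ContDiff ℝ 2 g)
    (hfs : HasCompactSupport f) (hgs : HasCompactSupport g) :
    Integrable (fun x => f x * lap g x) ∧ Integrable (lap f) ∧
      ∫ x, f x * lap g x = ∫ x, lap f x * g x := by
  have hD : ∀ {h : Euc n → ℝ}, ContDiff ℝ 2 h → ∀ a : Euc n,
      ContDiff ℝ 1 (fun y => fderiv ℝ h y a) := fun hh a =>
    (hh.fderiv_right (by norm_num)).clm_apply contDiff_const
  have hDD : ∀ {h : Euc n → ℝ}, ContDiff ℝ 2 h → ∀ a : Euc n,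
      Continuous (fun x => fderiv ℝ (fun y => fderiv ℝ h y a) x a) := fun hh a =>
    ((hD hh a).continuous_fderiv (by simp)).clm_apply continuous_const
  have hS : ∀ {h : Euc n → ℝ}, HasCompactSupport h → ∀ a : Euc n,
      HasCompactSupport (fun y => fderiv ℝ h y a) := fun hh a => hh.fderiv_apply ℝ a
  have i1 : ∀ i : Fin n, Integrable (fun x => f x *
      fderiv ℝ (fun y => fderiv ℝ g y (EuclideanSpace.single i 1)) x
        (EuclideanSpace.single i 1)) := fun i =>
    (hf.continuous.mul (hDD hg _)).integrable_of_hasCompactSupport hfs.mul_right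
  have i2 : ∀ i : Fin n, Integrable (fun x =>
      fderiv ℝ (fun y => fderiv ℝ f y (EuclideanSpace.single i 1)) x
        (EuclideanSpace.single i 1) * g x) := fun i =>
    ((hDD hf _).mul hg.continuous).integrable_of_hasCompactSupport hgs.mul_left
  have i3 : ∀ i : Fin n, Integrable (fun x =>
      fderiv ℝ (fun y => fderiv ℝ f y (EuclideanSpace.single i 1)) x
        (EuclideanSpace.single i 1)) := fun i =>
    (hDD hf _).integrable_of_hasCompactSupport (hS (hS hfs _) _)
  refine ⟨?_, ?_, ?_⟩
  · simp only [lap, Finset.mul_sum]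
    exact integrable_finsetSum _ fun i _ => i1 i
  · unfold lap
    exact integrable_finsetSum _ fun i _ => i3 i
  · simp only [lap, Finset.mul_sum, Finset.sum_mul]
    rw [integral_finsetSum _ fun i _ => i1 i, integral_finsetSum _ fun i _ => i2 i]
    refine Finset.sum_congr rfl fun i _ => ?_
    set a : Euc n := EuclideanSpace.single i 1
    have cf := hf.continuous
    have cg := hg.continuous
    have cf1 := (hD hf a).continuous
    have cg1 := (hD hg a).continuous
    have i4 : Integrable (fun x => fderiv ℝ f x a * fderiv ℝ g x a) :=
      (cf1.mul cg1).integrable_of_hasCompactSupport (hS hfs a).mul_right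
    have i5 : Integrable (fun x => f x * fderiv ℝ g x a) :=
      (cf.mul cg1).integrable_of_hasCompactSupport hfs.mul_right
    have i6 : Integrable (fun x => fderiv ℝ f x a * g x) :=
      (cf1.mul cg).integrable_of_hasCompactSupport hgs.mul_left
    rw [integral_mul_fderiv_eq_neg_fderiv_mul_of_integrable i4 (i1 i) i5
      (fun x _ => hf.differentiable (by simp) x)
      (fun x _ => (hD hg a).differentiable (by simp) x),
      integral_mul_fderiv_eq_neg_fderiv_mul_of_integrable (i2 i) i4 i6
      (fun x _ => (hD hf a).differentiable (by simp) x)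
      (fun x _ => hg.differentiable (by simp) x), neg_neg]

end Laplacian

/-- With `w = u - v - e·x`, the bound `|Δw| ≤ Δ(u + v)` lets the correction `2ε(u + v)` absorb the
term `2wΔw` of `Δ(w²)`. -/
lemma two_mul_norm_gradient_sq_le_lap {n : ℕ} {u v : Euc n → ℝ} {e x : Euc n} {κ ε : ℝ}
    (hκ : 0 ≤ κ) (hu : ContDiffAt ℝ 2 u x) (hv : ContDiffAt ℝ 2 v x)
    (hux : 0 < u x) (hvx : 0 < v x)
    (hlu : lap u x = κ * u x * v x ^ 2) (hlv : lap v x = κ * v x * u x ^ 2)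
    (hw : |u x - v x - ⟪e, x⟫| ≤ ε) :
    2 * ‖gradient u x - gradient v x - e‖ ^ 2 ≤
      lap (fun y => (u y - v y - ⟪e, y⟫) ^ 2 + 2 * ε * (u y + v y)) x := by
  have he : ContDiffAt ℝ 2 (fun y : Euc n => ⟪e, y⟫) x :=
    (contDiff_const.inner ℝ contDiff_id).contDiffAt
  have hwd : ContDiffAt ℝ 2 (fun y => u y - v y - ⟪e, y⟫) x := (hu.sub hv).sub he
  have hg : gradient (fun y => u y - v y - ⟪e, y⟫) x = gradient u x - gradient v x - e := by
    apply HasGradientAt.gradient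
    rw [hasGradientAt_iff_hasFDerivAt, map_sub, map_sub, toDual_gradient, toDual_gradient]
    exact ((hu.differentiableAt (by simp)).hasFDerivAt.sub
      (hv.differentiableAt (by simp)).hasFDerivAt).sub (innerSL ℝ e).hasFDerivAt
  have hlw : lap (fun y => u y - v y - ⟪e, y⟫) x = κ * u x * v x * (v x - u x) := by
    have h : (fun y => u y - v y - ⟪e, y⟫) =
        fun y => (u y + (-1) * v y) + (-1) * ⟪e, y⟫ := by
      funext y; ring
    rw [h, lap_add (hu.add (contDiffAt_const.mul hv)) (contDiffAt_const.mul he),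
      lap_add hu (contDiffAt_const.mul hv), lap_const_mul hv, lap_const_mul he, lap_inner,
      hlu, hlv]
    ring
  rw [lap_add (hwd.pow 2) (contDiffAt_const.mul (hu.add hv)), lap_sq hwd,
    lap_const_mul (hu.add hv), lap_add hu hv, hg, hlw, hlu, hlv]
  set w := u x - v x - ⟪e, x⟫
  obtain ⟨h1, h2⟩ := abs_le.1 hw
  have hP : 0 ≤ κ * u x * v x := by positivity
  -- `w (v - u) + ε (u + v) = v (ε + w) + u (ε - w)`
  have hQ : 0 ≤ v x * (ε + w) + u x * (ε - w) := by
    have := mul_nonneg hvx.le (by linarith : 0 ≤ ε + w)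
    have := mul_nonneg hux.le (by linarith : 0 ≤ ε - w)
    linarith
  nlinarith [mul_nonneg hP hQ]

lemma two_le_smooth : (2 : WithTop ℕ∞) ≤ ((⊤ : ℕ∞) : WithTop ℕ∞) :=
  WithTop.coe_le_coe.2 (le_top : (2 : ℕ∞) ≤ ⊤)

theorem uniform_flatness_from_closeness (n : ℕ) (hn : 2 ≤ n)
    (δ Λ : ℝ) (hδ : 0 < δ) (hΛ : 0 < Λ) :
    ∃ ε > (0 : ℝ), ∃ κ₀ > (0 : ℝ), ∀ κ ≥ κ₀, ∀ u v : Euc n → ℝ,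
      ContDiffOn ℝ (⊤ : ℕ∞) u (ball (0 : Euc n) 2) →
      ContDiffOn ℝ (⊤ : ℕ∞) v (ball (0 : Euc n) 2) →
      (∀ x ∈ ball (0 : Euc n) 2, 0 < u x ∧ u x ≤ Λ) →
      (∀ x ∈ ball (0 : Euc n) 2, 0 < v x ∧ v x ≤ Λ) →
      (∀ x ∈ ball (0 : Euc n) 2, lap u x = κ * u x * v x ^ 2) →
      (∀ x ∈ ball (0 : Euc n) 2, lap v x = κ * v x * u x ^ 2) →
      ∀ e : Euc n, ‖e‖ ≤ Λ →
      (∀ x ∈ ball (0 : Euc n) 2, |u x - v x - ⟪e, x⟫| ≤ ε) →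
      ∫ x in ball (0 : Euc n) 1, ‖gradient u x - gradient v x - e‖ ^ 2 ≤ δ ^ 2 := by
  -- `η` is the test function; `χ` only serves to extend `F` smoothly to the whole space.
  let η : ContDiffBump (0 : Euc n) := ⟨1, 3 / 2, by norm_num, by norm_num⟩
  let χ : ContDiffBump (0 : Euc n) := ⟨3 / 2, 7 / 4, by norm_num, by norm_num⟩
  set K : ℝ := ∫ x, |lap η x| with hK
  have hK0 : 0 ≤ K := integral_nonneg fun x => abs_nonneg _
  set ε : ℝ := min 1 (δ ^ 2 / ((1 + 4 * Λ) * (K + 1))) with hε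
  have hε0 : 0 < ε := by positivity
  have hε1 : ε ≤ 1 := min_le_left _ _
  have hε2 : ε * ((1 + 4 * Λ) * (K + 1)) ≤ δ ^ 2 :=
    (le_div_iff₀ (by positivity)).1 (min_le_right _ _)
  refine ⟨ε, hε0, 1, one_pos, ?_⟩
  intro κ hκ u v hu hv hub hvb hlu hlv e _ hw
  have hu2 : ∀ x ∈ ball (0 : Euc n) 2, ContDiffAt ℝ 2 u x := fun x hx =>
    (hu.contDiffAt (isOpen_ball.mem_nhds hx)).of_le two_le_smooth
  have hv2 : ∀ x ∈ ball (0 : Euc n) 2, ContDiffAt ℝ 2 v x := fun x hx =>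
    (hv.contDiffAt (isOpen_ball.mem_nhds hx)).of_le two_le_smooth
  set F : Euc n → ℝ := fun y => (u y - v y - ⟪e, y⟫) ^ 2 + 2 * ε * (u y + v y) with hF
  set M : ℝ := ε ^ 2 + 4 * ε * Λ with hM
  have hM0 : 0 ≤ M := by positivity
  have hFb : ∀ x ∈ ball (0 : Euc n) 2, |F x| ≤ M := by
    intro x hx
    obtain ⟨h1, h2⟩ := hub x hx
    obtain ⟨h3, h4⟩ := hvb x hx
    have h5 := sq_le_sq' (abs_le.1 (hw x hx)).1 (abs_le.1 (hw x hx)).2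
    rw [abs_of_nonneg (by positivity)]
    have h6 : ε * (u x + v x) ≤ ε * (2 * Λ) := by gcongr; linarith
    simp only [hF, hM]
    linarith
  set G : Euc n → ℝ := fun y => χ y * F y with hG
  have hGc : ContDiff ℝ 2 G := by
    rw [contDiff_iff_contDiffAt]
    intro x
    by_cases hx : x ∈ ball (0 : Euc n) 2
    · have he : ContDiffAt ℝ 2 (fun y : Euc n => ⟪e, y⟫) x :=
        (contDiff_const.inner ℝ contDiff_id).contDiffAt
      exact χ.contDiffAt.mul (((((hu2 x hx).sub (hv2 x hx)).sub he).pow 2).add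
        (contDiffAt_const.mul ((hu2 x hx).add (hv2 x hx))))
    · have hx' : x ∉ tsupport χ := by
        rw [χ.tsupport_eq]
        simp only [mem_ball, mem_closedBall, not_lt, not_le] at hx ⊢
        exact lt_of_lt_of_le (by norm_num [χ]) hx
      have h0 : G =ᶠ[nhds x] fun _ => 0 := by
        filter_upwards [notMem_tsupport_iff_eventuallyEq.1 hx'] with y hy
        simp [hG, hy]
      exact contDiffAt_const.congr_of_eventuallyEq h0
  have hGs : HasCompactSupport G := χ.hasCompactSupport.mul_right
  have hGb : ∀ x, |G x| ≤ M := by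
    intro x
    by_cases hx : x ∈ ball (0 : Euc n) 2
    · rw [hG, abs_mul, abs_of_nonneg χ.nonneg]
      calc χ x * |F x| ≤ 1 * M :=
            mul_le_mul χ.le_one (hFb x hx) (abs_nonneg _) zero_le_one
        _ = M := one_mul M
    · have h0 : χ x = 0 := χ.zero_of_le_dist (by
        simp only [mem_ball, not_lt] at hx
        exact le_trans (by norm_num [χ]) hx)
      simpa [hG, h0] using hM0
  have hkey : ∀ x ∈ ball (0 : Euc n) (3 / 2),
      2 * ‖gradient u x - gradient v x - e‖ ^ 2 ≤ lap G x := by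
    intro x hx
    have hx2 : x ∈ ball (0 : Euc n) 2 := ball_subset_ball (by norm_num) hx
    have hGF : G =ᶠ[nhds x] F := by
      filter_upwards [χ.eventuallyEq_one_of_mem_ball hx] with y hy
      simp [hG, hy]
    rw [lap_congr hGF]
    exact two_mul_norm_gradient_sq_le_lap (by linarith) (hu2 x hx2) (hv2 x hx2)
      (hub x hx2).1 (hvb x hx2).1 (hlu x hx2) (hlv x hx2) (hw x hx2)
  obtain ⟨hi1, hi2, hgreen⟩ := integral_mul_lap_eq (f := η) (g := G) η.contDiff hGc
    η.hasCompactSupport hGs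
  have hpos : ∀ x, 0 ≤ η x * lap G x := by
    intro x
    by_cases hx : x ∈ ball (0 : Euc n) (3 / 2)
    · exact mul_nonneg η.nonneg (le_trans (by positivity) (hkey x hx))
    · have h0 : η x = 0 := η.zero_of_le_dist (by simpa using hx)
      simp [h0]
  have hle1 : ∫ x in ball (0 : Euc n) 1, ‖gradient u x - gradient v x - e‖ ^ 2 ≤
      ∫ x in ball (0 : Euc n) 1, η x * lap G x := by
    refine integral_mono_of_nonneg (Filter.Eventually.of_forall fun x => by positivity)
      hi1.integrableOn ?_
    filter_upwards [ae_restrict_mem measurableSet_ball] with x hx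
    have h1 : η x = 1 := η.one_of_mem_closedBall (ball_subset_closedBall hx)
    have h2 := hkey x (ball_subset_ball (by norm_num) hx)
    have h3 : 0 ≤ ‖gradient u x - gradient v x - e‖ ^ 2 := by positivity
    simp only [h1]
    linarith
  have hle2 : ∫ x in ball (0 : Euc n) 1, η x * lap G x ≤ ∫ x, η x * lap G x :=
    setIntegral_le_integral hi1 (Filter.Eventually.of_forall hpos)
  have hle3 : ∫ x, lap η x * G x ≤ K * M := by
    rw [hK, ← integral_mul_const]
    refine (le_abs_self _).trans ((abs_integral_le_integral_abs).trans ?_)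
    refine integral_mono_of_nonneg (Filter.Eventually.of_forall fun x => abs_nonneg _)
      (hi2.abs.mul_const M) (Filter.Eventually.of_forall fun x => ?_)
    simp only [abs_mul]
    exact mul_le_mul_of_nonneg_left (hGb x) (abs_nonneg _)
  have hle4 : K * M ≤ δ ^ 2 := by
    have hMle : M ≤ ε * (1 + 4 * Λ) := by nlinarith
    calc K * M ≤ (K + 1) * (ε * (1 + 4 * Λ)) := by gcongr; linarith
      _ = ε * ((1 + 4 * Λ) * (K + 1)) := by ring
      _ ≤ δ ^ 2 := hε2
  linarith
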